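/- arXiv:0908.4014 — 5 statements merged into one kernel-verified Lean document; each statement's English description precedes it below -/
import Mathlib

section
/- Let L = ℤ[q_i, x_i : i ∈ ℤ] be the polynomial ring over ℤ in two families of indeterminates indexed by ℤ and let K be its fraction field. Suppose t : ℤ × ℕ → K satisfies t_{i,0} = 1 and t_{i,1} = x_i for all i ∈ ℤ, and the recurrence t_{i,n} · t_{i+1,n} = t_{i,n+1} · t_{i+1,n-1} + ∏_{k=1}^{n} q_{i+k} for all i ∈ ℤ and all n ≥ 1. Then for every i ∈ ℤ and n ≥ 1, t_{i,n} equals (the image in K of) the determinant of the n×n tridiagonal matrix whose diagonal entries, from top-left to bottom-right, are x_{i+n-1}, x_{i+n-2}, …, x_i, whose superdiagonal entries are all 1, and whose subdiagonal entries, from top to bottom, are q_{i+n-1}, q_{i+n-2}, …, q_{i+1}. In particular each t_{i,n} is a polynomial in the q_j and x_j. -/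
/-- The `n × n` tridiagonal matrix whose diagonal entries, from top-left to bottom-right,
are `x (i+n-1), x (i+n-2), …, x i`, whose superdiagonal entries are all `1`, and whose
subdiagonal entries, from top to bottom, are `q (i+n-1), …, q (i+1)`. -/
def triMat {R : Type*} [CommRing R] (q x : ℤ → R) (i : ℤ) (n : ℕ) :
    Matrix (Fin n) (Fin n) R :=
  Matrix.of fun j k =>
    if (j : ℕ) = (k : ℕ) then x (i + (n : ℤ) - 1 - (j : ℕ))
    else if (j : ℕ) + 1 = (k : ℕ) then 1
    else if (k : ℕ) + 1 = (j : ℕ) then q (i + (n : ℤ) - 1 - (k : ℕ))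
    else 0

/-- The tridiagonal determinant `D_{i,n}(q,x)`; by convention `D_{i,0}(q,x) = 1`. -/
def triDet {R : Type*} [CommRing R] (q x : ℤ → R) (i : ℤ) (n : ℕ) : R :=
  (triMat q x i n).det

/-- The polynomial ring `L = ℤ[q_i, x_i : i ∈ ℤ]`. -/
abbrev L := MvPolynomial (ℤ ⊕ ℤ) ℤ

/-- The fraction field `K` of `L`. -/
abbrev K := FractionRing L

/-- The indeterminate `q_i`. -/
noncomputable def qvar (i : ℤ) : L := MvPolynomial.X (Sum.inl i)

/-- The indeterminate `x_i`. -/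
noncomputable def xvar (i : ℤ) : L := MvPolynomial.X (Sum.inr i)

/-!
Expanding along the first row and column shows that the tridiagonal determinants satisfy the
three-term recurrence `D_{i,n+2} = x_{i+n+1} D_{i,n+1} - q_{i+n+1} D_{i,n}`. The exchange relation
follows by induction: applying the three-term recurrence to both of its sides multiplies the
defect `D_{i,n+1} D_{i+1,n+1} - D_{i,n+2} D_{i+1,n}` by the next `q`. Conversely, the exchange
relation determines `t_{i,n+1}` from lower terms as soon as `D_{i+1,n-1}` can be cancelled. For
indeterminates it can, since it specializes to `1` at `q = 0`, `x = 1`.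
-/

section

variable {R S : Type*} [CommRing R] [CommRing S]

theorem det_eq_sub_of_tridiagonal_corner {n : ℕ} (M : Matrix (Fin (n + 2)) (Fin (n + 2)) R)
    (hrow : ∀ j : Fin n, M 0 j.succ.succ = 0) (hcol : ∀ j : Fin n, M j.succ.succ 0 = 0) :
    M.det = M 0 0 * (M.submatrix Fin.succ Fin.succ).det -
      M 0 1 * M 1 0 * ((M.submatrix Fin.succ Fin.succ).submatrix Fin.succ Fin.succ).det := by
  have minor_zero_one : (M.submatrix Fin.succ (Fin.succAbove 1)).det =
      M 1 0 * ((M.submatrix Fin.succ Fin.succ).submatrix Fin.succ Fin.succ).det := by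
    have succAbove_one_comp_succ : Fin.succAbove (1 : Fin (n + 2)) ∘ Fin.succ =
        Fin.succ ∘ Fin.succ := by
      funext j
      exact Fin.one_succAbove_succ j
    rw [Matrix.det_succ_column_zero, Fin.sum_univ_succ,
      Finset.sum_eq_zero fun j _ => by simp [hcol]]
    simp [succAbove_one_comp_succ]
  rw [Matrix.det_succ_row_zero, Fin.sum_univ_succ, Fin.sum_univ_succ,
    Finset.sum_eq_zero fun j _ => by simp [hrow], Fin.succ_zero_eq_one, minor_zero_one,
    Fin.succAbove_zero]
  simp only [Fin.val_zero, Fin.val_one, pow_zero, pow_one, one_mul, neg_mul, add_zero]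
  ring

theorem triMat_submatrix_succ (q x : ℤ → R) (i : ℤ) (n : ℕ) :
    (triMat q x i (n + 1)).submatrix Fin.succ Fin.succ = triMat q x i n := by
  have index_shift (a : ℕ) : i + ((n + 1 : ℕ) : ℤ) - 1 - ((a + 1 : ℕ) : ℤ) = i + n - 1 - a := by
    push_cast
    ring
  ext j k
  simp only [triMat, Matrix.submatrix_apply, Matrix.of_apply, Fin.val_succ, index_shift,
    add_left_inj]

theorem triDet_zero (q x : ℤ → R) (i : ℤ) : triDet q x i 0 = 1 :=
  Matrix.det_fin_zero

theorem triDet_one (q x : ℤ → R) (i : ℤ) : triDet q x i 1 = x i := by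
  simp [triDet, triMat]

theorem triDet_add_two (q x : ℤ → R) (i : ℤ) (n : ℕ) :
    triDet q x i (n + 2) =
      x (i + n + 1) * triDet q x i (n + 1) - q (i + n + 1) * triDet q x i n := by
  have top_index : i + ((n : ℤ) + 2) - 1 = i + n + 1 := by ring
  have h00 : triMat q x i (n + 2) 0 0 = x (i + n + 1) := by simp [triMat, top_index]
  have h01 : triMat q x i (n + 2) 0 1 = 1 := by simp [triMat]
  have h10 : triMat q x i (n + 2) 1 0 = q (i + n + 1) := by simp [triMat, top_index]
  rw [triDet, det_eq_sub_of_tridiagonal_corner _ (by simp [triMat]) (by simp [triMat]),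
    triMat_submatrix_succ, triMat_submatrix_succ, h00, h01, h10, one_mul]
  rfl

theorem triDet_mul_triDet_add_one (q x : ℤ → R) (i : ℤ) (n : ℕ) :
    triDet q x i (n + 1) * triDet q x (i + 1) (n + 1) =
      triDet q x i (n + 2) * triDet q x (i + 1) n +
        ∏ k ∈ Finset.Icc 1 (n + 1), q (i + (k : ℕ)) := by
  induction n with
  | zero =>
    simp only [triDet_add_two, triDet_zero, triDet_one, zero_add, Finset.Icc_self,
      Finset.prod_singleton, Nat.cast_zero, Nat.cast_one, add_zero]
    ring
  | succ n ih =>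
    have shift : i + 1 + (n : ℤ) + 1 = i + ((n + 1 : ℕ) : ℤ) + 1 := by push_cast; ring
    have last : i + ((n + 1 + 1 : ℕ) : ℤ) = i + ((n + 1 : ℕ) : ℤ) + 1 := by push_cast; ring
    rw [Finset.prod_Icc_succ_top (Nat.le_add_left 1 (n + 1)), triDet_add_two q x i (n + 1),
      triDet_add_two q x (i + 1) n, shift, last]
    linear_combination q (i + ((n + 1 : ℕ) : ℤ) + 1) * ih

theorem map_triDet (f : R →+* S) (q x : ℤ → R) (i : ℤ) (n : ℕ) :
    f (triDet q x i n) = triDet (f ∘ q) (f ∘ x) i n := by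
  have map_triMat : f.mapMatrix (triMat q x i n) = triMat (f ∘ q) (f ∘ x) i n := by
    ext j k
    simp [triMat, apply_ite f]
  rw [triDet, RingHom.map_det, map_triMat, triDet]

theorem triDet_zero_left (x : ℤ → R) (i : ℤ) (n : ℕ) :
    triDet 0 x i n = ∏ j : Fin n, x (i + n - 1 - (j : ℕ)) := by
  have upper_triangular : (triMat 0 x i n).IsUpperTriangular := by
    intro j k hkj
    have hkj_val : (k : ℕ) < j := hkj
    simp [triMat, show (j : ℕ) ≠ k by omega, show (j : ℕ) + 1 ≠ k by omega]
  rw [triDet, Matrix.det_of_isUpperTriangular upper_triangular]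
  simp [triMat]

theorem quantized_chebyshev_det_general {q x : ℤ → R}
    (hreg : ∀ (i : ℤ) (n : ℕ), triDet q x i n ∈ nonZeroDivisors R) (t : ℤ × ℕ → R)
    (h0 : ∀ i : ℤ, t (i, 0) = 1)
    (h1 : ∀ i : ℤ, t (i, 1) = x i)
    (hrec : ∀ (i : ℤ) (n : ℕ), 1 ≤ n →
      t (i, n) * t (i + 1, n) =
        t (i, n + 1) * t (i + 1, n - 1) + ∏ k ∈ Finset.Icc 1 n, q (i + (k : ℕ))) :
    ∀ (i : ℤ) (n : ℕ), t (i, n) = triDet q x i n := by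
  intro i n
  induction n using Nat.twoStepInduction generalizing i with
  | zero => rw [h0, triDet_zero]
  | one => rw [h1, triDet_one]
  | more n ih ih' =>
    have exchange : t (i, n + 2) * triDet q x (i + 1) n =
        triDet q x i (n + 2) * triDet q x (i + 1) n := by
      have hrec_succ := hrec i (n + 1) (Nat.le_add_left 1 n)
      rw [ih', ih', Nat.add_sub_cancel, ih, triDet_mul_triDet_add_one] at hrec_succ
      exact (add_right_cancel hrec_succ).symm
    exact (mul_cancel_right_mem_nonZeroDivisors (hreg (i + 1) n)).mp exchange

end

theorem triDet_qvar_xvar_ne_zero (i : ℤ) (n : ℕ) : triDet qvar xvar i n ≠ 0 := by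
  let f : L →+* ℤ := MvPolynomial.eval (Sum.elim 0 1)
  have map_qvar : f ∘ qvar = 0 := by
    funext j
    simp [f, qvar]
  have map_xvar : f ∘ xvar = 1 := by
    funext j
    simp [f, xvar]
  have map_triDet_eq_one : f (triDet qvar xvar i n) = 1 := by
    simp [map_triDet, map_qvar, map_xvar, triDet_zero_left]
  exact ne_zero_of_map (map_triDet_eq_one ▸ one_ne_zero)

theorem triDet_algebraMap_comp_mem_nonZeroDivisors (i : ℤ) (n : ℕ) :
    triDet (algebraMap L K ∘ qvar) (algebraMap L K ∘ xvar) i n ∈ nonZeroDivisors K := by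
  rw [← map_triDet]
  exact map_mem_nonZeroDivisors _ (IsFractionRing.injective L K)
    (mem_nonZeroDivisors_of_ne_zero (triDet_qvar_xvar_ne_zero i n))

/-- Theorem 1: if `t : ℤ × ℕ → K` satisfies `t_{i,0} = 1`, `t_{i,1} = x_i` and the
recurrence `t_{i,n} t_{i+1,n} = t_{i,n+1} t_{i+1,n-1} + ∏_{k=1}^n q_{i+k}` for `n ≥ 1`,
then `t_{i,n}` is the tridiagonal determinant `D_{i,n}(q,x)`; in particular it is a
polynomial in the `q_j` and `x_j`. -/
theorem quantized_chebyshev_det (t : ℤ × ℕ → K)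
    (h0 : ∀ i : ℤ, t (i, 0) = 1)
    (h1 : ∀ i : ℤ, t (i, 1) = algebraMap L K (xvar i))
    (hrec : ∀ (i : ℤ) (n : ℕ), 1 ≤ n →
      t (i, n) * t (i + 1, n) =
        t (i, n + 1) * t (i + 1, n - 1) +
          algebraMap L K (∏ k ∈ Finset.Icc 1 n, qvar (i + (k : ℕ)))) :
    ∀ (i : ℤ) (n : ℕ), 1 ≤ n →
      t (i, n) = algebraMap L K (triDet qvar xvar i n) := by
  intro i n _
  rw [map_triDet]
  exact quantized_chebyshev_det_general triDet_algebraMap_comp_mem_nonZeroDivisors t h0 h1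
    (by simpa only [map_prod, Function.comp_apply] using hrec) i n
end

section
/- Fix an integer r ≥ 1 and let K_r = ℚ(x_0, …, x_{r-1}, y_0, …, y_{r-1}) be the field of rational functions in 2r indeterminates over ℚ; adopt the convention x_j = 1 for j < 0 or j ≥ r. For 0 ≤ i ≤ r−1 and 0 ≤ n ≤ r−i define X_{i,n} = Σ_{k=0}^{n} (∏_{j=i}^{i+k-1} y_j) · x_{i-1} x_{i+n} / (x_{i+k-1} x_{i+k}) ∈ K_r (empty products equal 1). Then for every 0 ≤ i ≤ r−2 and 1 ≤ n ≤ r−1−i, the multiplication identity X_{i,n} · X_{i+1,n} = X_{i,n+1} · X_{i+1,n-1} + ∏_{j=i+1}^{i+n} y_j holds in K_r. -/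
/-- The field `K_r = ℚ(x_0, …, x_{r-1}, y_0, …, y_{r-1})` of rational functions in `2r`
indeterminates over `ℚ`. -/
abbrev Kr (r : ℕ) := FractionRing (MvPolynomial (Fin r ⊕ Fin r) ℚ)

/-- The element `x_j` of `K_r`, with the convention `x_j = 1` for `j < 0` or `j ≥ r`. -/
noncomputable def xcl (r : ℕ) (j : ℤ) : Kr r :=
  if h : 0 ≤ j ∧ j < (r : ℤ) then
    algebraMap (MvPolynomial (Fin r ⊕ Fin r) ℚ) (Kr r)
      (MvPolynomial.X (Sum.inl ⟨j.toNat, by omega⟩))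
  else 1

/-- The element `y_j` of `K_r` (by convention `1` out of range, which is never used). -/
noncomputable def ycl (r : ℕ) (j : ℤ) : Kr r :=
  if h : 0 ≤ j ∧ j < (r : ℤ) then
    algebraMap (MvPolynomial (Fin r ⊕ Fin r) ℚ) (Kr r)
      (MvPolynomial.X (Sum.inr ⟨j.toNat, by omega⟩))
  else 1

/-- The Laurent expansion `X_{i,n} = Σ_{k=0}^{n} (∏_{j=i}^{i+k-1} y_j) ·
x_{i-1} x_{i+n} / (x_{i+k-1} x_{i+k})` of the cluster character with principal
coefficients of the indecomposable module `S_i^{(n)}`. -/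
noncomputable def Xcl (r : ℕ) (i : ℤ) (n : ℕ) : Kr r :=
  ∑ k ∈ Finset.range (n + 1),
    (∏ j ∈ Finset.range k, ycl r (i + (j : ℕ))) *
      xcl r (i - 1) * xcl r (i + (n : ℕ)) /
        (xcl r (i + (k : ℕ) - 1) * xcl r (i + (k : ℕ)))

/-!
Write `X_{i,n} = x_{i-1} x_{i+n} S_{i,n+1}`, where `S_{i,n}` is a sum of `n` terms. Splitting off
its first term gives `S_{i,n+1} = h + y_i S_{i+1,n}` with `h = 1 / (x_{i-1} x_i)` independent of
`n`, so

  `S_{i,n+1} S_{i+1,n+1} - S_{i,n+2} S_{i+1,n} = h (S_{i+1,n+1} - S_{i+1,n})`,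

which is `h` times the last term of `S_{i+1,n+1}`, a single monomial. No cancellation is needed
when the negative term is moved to the right, so the identity holds over any semifield.
-/

theorem xcl_ne_zero (r : ℕ) (j : ℤ) : xcl r j ≠ 0 := by
  unfold xcl
  split_ifs
  · exact IsFractionRing.to_map_eq_zero_iff.not.mpr (MvPolynomial.X_ne_zero _)
  · exact one_ne_zero

section Semifield

open Finset

variable {F : Type*} [Semifield F] (x y : ℤ → F) (i : ℤ) (n : ℕ)

/-- The Laurent expansion `X_{i,n}` evaluated at arbitrary sequences `x`, `y` in a semifield. -/
def clusterChar : F :=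
  ∑ k ∈ range (n + 1),
    (∏ j ∈ range k, y (i + j)) * x (i - 1) * x (i + n) / (x (i + k - 1) * x (i + k))

/-- The sum left of `X_{i,n-1}` after removing the common factor `x_{i-1} x_{i+n-1}`. It is indexed
by its number `n` of terms, so that `n = 0` gives the empty sum. -/
def clusterCharSum : F :=
  ∑ k ∈ range n, (∏ j ∈ range k, y (i + j)) / (x (i + k - 1) * x (i + k))

theorem clusterChar_eq_mul_clusterCharSum :
    clusterChar x y i n = x (i - 1) * x (i + n) * clusterCharSum x y i (n + 1) := by
  rw [clusterChar, clusterCharSum, mul_sum]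
  exact sum_congr rfl fun k _ => by ring

theorem clusterCharSum_succ :
    clusterCharSum x y i (n + 1) = clusterCharSum x y i n +
      (∏ j ∈ range n, y (i + j)) / (x (i + n - 1) * x (i + n)) :=
  sum_range_succ _ n

theorem clusterCharSum_succ' :
    clusterCharSum x y i (n + 1) =
      1 / (x (i - 1) * x i) + y i * clusterCharSum x y (i + 1) n := by
  have shift (k : ℕ) : i + ((k + 1 : ℕ) : ℤ) = i + 1 + k := by push_cast; ring
  simp only [clusterCharSum, sum_range_succ', prod_range_succ', prod_range_zero, shift,
    Nat.cast_zero, add_zero, mul_sum]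
  rw [add_comm]
  exact congrArg _ (sum_congr rfl fun k _ => by ring)

theorem clusterCharSum_succ_mul_clusterCharSum_succ :
    clusterCharSum x y i (n + 1) * clusterCharSum x y (i + 1) (n + 1) =
      clusterCharSum x y i (n + 2) * clusterCharSum x y (i + 1) n +
        (∏ j ∈ range n, y (i + 1 + j)) / (x (i - 1) * x i * x (i + n) * x (i + n + 1)) := by
  have last : clusterCharSum x y (i + 1) (n + 1) = clusterCharSum x y (i + 1) n +
      (∏ j ∈ range n, y (i + 1 + j)) / (x (i + n) * x (i + n + 1)) := by
    rw [clusterCharSum_succ, add_right_comm, add_sub_cancel_right]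
  rw [clusterCharSum_succ' x y i n, clusterCharSum_succ' x y i (n + 1), last]
  ring

variable {x n}

theorem cluster_character_typeA_mult_general (hx : ∀ j, x j ≠ 0) (hn : 1 ≤ n) :
    clusterChar x y i n * clusterChar x y (i + 1) n =
      clusterChar x y i (n + 1) * clusterChar x y (i + 1) (n - 1) +
        ∏ j ∈ Icc 1 n, y (i + (j : ℕ)) := by
  have right_end : i + 1 + ((n - 1 : ℕ) : ℤ) = i + n := by omega
  have prod_eq : ∏ j ∈ Icc 1 n, y (i + (j : ℕ)) = ∏ j ∈ range n, y (i + 1 + j) := by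
    rw [← Ico_add_one_right_eq_Icc, prod_Ico_eq_prod_range]
    simp only [Nat.add_sub_cancel, Nat.cast_add, Nat.cast_one, add_assoc]
  let c := x (i - 1) * x i * x (i + n) * x (i + n + 1)
  have c_ne_zero : c ≠ 0 := by simp [c, hx]
  calc
    clusterChar x y i n * clusterChar x y (i + 1) n
    _ = c * (clusterCharSum x y i (n + 1) * clusterCharSum x y (i + 1) (n + 1)) := by
      simp only [clusterChar_eq_mul_clusterCharSum, add_sub_cancel_right, add_right_comm i 1, c]
      ring
    _ = c * (clusterCharSum x y i (n + 2) * clusterCharSum x y (i + 1) n +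
        (∏ j ∈ range n, y (i + 1 + j)) / c) := by
      rw [clusterCharSum_succ_mul_clusterCharSum_succ]
    _ = c * (clusterCharSum x y i (n + 2) * clusterCharSum x y (i + 1) n) +
        ∏ j ∈ range n, y (i + 1 + j) := by
      rw [mul_add, mul_div_cancel₀ _ c_ne_zero]
    _ = clusterChar x y i (n + 1) * clusterChar x y (i + 1) (n - 1) +
        ∏ j ∈ Icc 1 n, y (i + (j : ℕ)) := by
      simp only [clusterChar_eq_mul_clusterCharSum, prod_eq, right_end, Nat.sub_add_cancel hn,
        add_sub_cancel_right, Nat.cast_succ, ← add_assoc, c]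
      ring

end Semifield

/-- Lemma 3.1: the multiplication identity
`X_{i,n} · X_{i+1,n} = X_{i,n+1} · X_{i+1,n-1} + ∏_{j=i+1}^{i+n} y_j`. -/
theorem cluster_character_typeA_mult (r : ℕ) (hr : 1 ≤ r) (i : ℤ) (n : ℕ)
    (hi0 : 0 ≤ i) (hir : i ≤ (r : ℤ) - 2) (hn : 1 ≤ n)
    (hnr : (n : ℤ) ≤ (r : ℤ) - 1 - i) :
    Xcl r i n * Xcl r (i + 1) n =
      Xcl r i (n + 1) * Xcl r (i + 1) (n - 1) +
        ∏ j ∈ Finset.Icc 1 n, ycl r (i + (j : ℕ)) :=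
  cluster_character_typeA_mult_general (ycl r) i (xcl_ne_zero r) hn
end

section
/- Fix an integer r ≥ 1 and let K_r = ℚ(x_0, …, x_{r-1}, y_0, …, y_{r-1}) be the field of rational functions in 2r indeterminates over ℚ; adopt the convention x_j = 1 for j < 0 or j ≥ r. For 0 ≤ i ≤ r−1 and 0 ≤ n ≤ r−i define X_{i,n} = Σ_{k=0}^{n} (∏_{j=i}^{i+k-1} y_j) · x_{i-1} x_{i+n} / (x_{i+k-1} x_{i+k}) ∈ K_r (empty products equal 1). Then for every 0 ≤ i ≤ r−2 and 1 ≤ n ≤ r−1−i, the three-term relation X_{i,n} · X_{i+n,1} = X_{i,n+1} + y_{i+n} · X_{i,n-1} holds in K_r. -/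
/-!
Write `X n` for `X_{i,n}`, `x n` for `x_{i+n}` and `y n` for `y_{i+n}`. Splitting off the last
summand of `X (n + 1)` gives the first-order relation
`X (n + 1) * x n = X n * x (n + 1) + (y 0 ⋯ y n) * x (-1)`.
The inhomogeneous term is multiplied by `y n` when passing from `n - 1` to `n`, so adding `y n`
times `X (n - 1) * x n` to this relation turns its right-hand side into
`X n * (x (n + 1) + y n * x (n - 1))`. The second factor is `X_{i+n,1} * x n`, by the first-order
relation starting from `X_{i+n,0} = 1`, and `x n` cancels.
No subtraction occurs, so the argument works in any semifield.
-/

section Semifield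

variable {K : Type*} [Semifield K] {x : ℤ → K}

/-- The Laurent expansion of the cluster character of `S_i^{(n)}`, evaluated at arbitrary families
`x` of cluster variables and `y` of coefficients in a semifield. The families are indexed by `ℤ`,
so a boundary convention on `x` or `y` is part of the choice of family. -/
def typeACharacter (x y : ℤ → K) (i : ℤ) (n : ℕ) : K :=
  ∑ k ∈ Finset.range (n + 1),
    (∏ j ∈ Finset.range k, y (i + j)) * x (i - 1) * x (i + n) / (x (i + k - 1) * x (i + k))

theorem typeACharacter_zero (hx : ∀ j, x j ≠ 0) (y : ℤ → K) (i : ℤ) :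
    typeACharacter x y i 0 = 1 := by
  simp [typeACharacter, hx]

theorem typeACharacter_succ_mul (hx : ∀ j, x j ≠ 0) (y : ℤ → K) (i : ℤ) (n : ℕ) :
    typeACharacter x y i (n + 1) * x (i + n) =
      typeACharacter x y i n * x (i + n + 1) +
        (∏ j ∈ Finset.range (n + 1), y (i + j)) * x (i - 1) := by
  have h_index : i + ((n + 1 : ℕ) : ℤ) = i + n + 1 := by push_cast; ring
  simp only [typeACharacter]
  rw [Finset.sum_range_succ _ (n + 1), h_index, add_sub_cancel_right, add_mul,
    Finset.sum_mul, Finset.sum_mul]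
  congr 1
  · exact Finset.sum_congr rfl fun k _ ↦ by ring
  · have h_left := hx (i + n)
    have h_right := hx (i + n + 1)
    field_simp

theorem typeACharacter_one_mul (hx : ∀ j, x j ≠ 0) (y : ℤ → K) (i : ℤ) :
    typeACharacter x y i 1 * x i = x (i + 1) + y i * x (i - 1) := by
  simpa [typeACharacter_zero hx] using typeACharacter_succ_mul hx y i 0

theorem cluster_character_typeA_three_term_general (hx : ∀ j, x j ≠ 0) (y : ℤ → K)
    (i : ℤ) {n : ℕ} (hn : 1 ≤ n) :
    typeACharacter x y i n * typeACharacter x y (i + n) 1 =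
      typeACharacter x y i (n + 1) + y (i + n) * typeACharacter x y i (n - 1) := by
  obtain ⟨m, rfl⟩ := Nat.exists_eq_add_of_le' hn
  rw [Nat.add_sub_cancel]
  set j : ℤ := i + (m + 1 : ℕ) with hj
  have h_prev : i + (m : ℤ) = j - 1 := by rw [hj]; push_cast; ring
  have h_lower := typeACharacter_succ_mul hx y i m
  rw [h_prev, sub_add_cancel] at h_lower
  have h_upper := typeACharacter_succ_mul hx y i (m + 1)
  rw [Finset.prod_range_succ, ← hj] at h_upper
  refine mul_right_cancel₀ (hx j) ?_
  calc
    typeACharacter x y i (m + 1) * typeACharacter x y j 1 * x j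
      = typeACharacter x y i (m + 1) * x (j + 1) +
          y j * (typeACharacter x y i (m + 1) * x (j - 1)) := by
        rw [mul_assoc, typeACharacter_one_mul hx]; ring
    _ = (typeACharacter x y i (m + 1) * x (j + 1) +
          (∏ k ∈ Finset.range (m + 1), y (i + k)) * y j * x (i - 1)) +
          y j * typeACharacter x y i m * x j := by
        rw [h_lower]; ring
    _ = (typeACharacter x y i (m + 1 + 1) + y j * typeACharacter x y i m) * x j := by
        rw [← h_upper, add_mul]

end Semifield

/-- Lemma 3.2: the three-term relation
`X_{i,n} · X_{i+n,1} = X_{i,n+1} + y_{i+n} · X_{i,n-1}`. -/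
theorem cluster_character_typeA_three_term (r : ℕ) (hr : 1 ≤ r) (i : ℤ) (n : ℕ)
    (hi0 : 0 ≤ i) (hir : i ≤ (r : ℤ) - 2) (hn : 1 ≤ n)
    (hnr : (n : ℤ) ≤ (r : ℤ) - 1 - i) :
    Xcl r i n * Xcl r (i + (n : ℕ)) 1 =
      Xcl r i (n + 1) + ycl r (i + (n : ℕ)) * Xcl r i (n - 1) :=
  cluster_character_typeA_three_term_general (xcl_ne_zero r) (ycl r) i hn
end

section
/- Fix an even integer r ≥ 2 and let K_r = ℚ(x_0, …, x_{r-1}, y_0, …, y_{r-1}) be the field of rational functions in 2r indeterminates over ℚ; adopt the convention x_j = 1 for j < 0 or j ≥ r. For 0 ≤ i ≤ r−1 set X_{i,1} = (x_{i+1} + y_i x_{i-1})/x_i ∈ K_r. Then the family {X_{0,1}, X_{1,1}, …, X_{r-1,1}} is algebraically independent over the subfield ℚ(y_0, …, y_{r-1}) of K_r. -/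
/-- The cluster character `X_{i,1} = (x_{i+1} + y_i x_{i-1}) / x_i` of the simple
module `S_i`. -/
noncomputable def X1 (r : ℕ) (i : ℤ) : Kr r :=
  (xcl r (i + 1) + ycl r i * xcl r (i - 1)) / xcl r i

/-!
Put `u n = x_{n-1}`, so that `u 0 = u (r + 1) = 1` and
`u (n + 2) = X_{n,1} * u (n + 1) - y_n * u n`. Hence `1 = u (r + 1) = Q + x_0 * P`, where `P` and
`Q` are polynomials in the `X_{i,1}` and `y_i`, namely the solutions of the recurrence at `r + 1`
with initial values `(0, 1)` and `(1, 0)`. As a polynomial in the `y_i` over `ℚ(x_0, …, x_{r-1})`,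
`P` has constant term `∏ i, x_{i+1} / x_i ≠ 0`, so `P ≠ 0`. Therefore `x_0 = (1 - Q) / P`, and then
every `x_i`, lies in the field generated by the `2r` elements `X_{i,1}` and `y_i`. This field has
transcendence degree `2r`, which forces these elements to be algebraically independent.
-/

section ThreeTermRecurrence

open MvPolynomial

/-- The solution `u` of the three-term recurrence `u (n + 2) = a n * u (n + 1) - b n * u n` with
initial values `u 0 = s` and `u 1 = t`. The cluster variables of a linear quiver of type `A` form
such a sequence, with the characters of the simple modules as coefficients `a`. -/
def threeTermRec {R : Type*} [CommRing R] (a b : ℕ → R) (s t : R) : ℕ → R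
  | 0 => s
  | 1 => t
  | n + 2 => a n * threeTermRec a b s t (n + 1) - b n * threeTermRec a b s t n

variable {R S : Type*} [CommRing R] [CommRing S] {m : ℕ}

theorem threeTermRec_eq_add (a b : ℕ → R) (s t : R) (n : ℕ) :
    threeTermRec a b s t n =
      s * threeTermRec a b 1 0 n + t * threeTermRec a b 0 1 n := by
  induction n using Nat.twoStepInduction with
  | zero => simp [threeTermRec]
  | one => simp [threeTermRec]
  | more n ih₀ ih₁ =>
    simp only [threeTermRec, ih₀, ih₁]
    ring

theorem eq_threeTermRec {a b u : ℕ → R}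
    (hu : ∀ n < m, u (n + 2) = a n * u (n + 1) - b n * u n) :
    ∀ n ≤ m + 1, u n = threeTermRec a b (u 0) (u 1) n := by
  intro n hn
  induction n using Nat.twoStepInduction with
  | zero => rfl
  | one => rfl
  | more n ih₀ ih₁ => rw [hu n (by omega), ih₀ (by omega), ih₁ (by omega), threeTermRec]

theorem map_threeTermRec (f : R →+* S) {a b : ℕ → R} {a' b' : ℕ → S}
    (ha : ∀ n < m, f (a n) = a' n) (hb : ∀ n < m, f (b n) = b' n) (s t : R) :
    ∀ n ≤ m + 1, f (threeTermRec a b s t n) = threeTermRec a' b' (f s) (f t) n := by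
  intro n hn
  induction n using Nat.twoStepInduction with
  | zero => rfl
  | one => rfl
  | more n ih₀ ih₁ =>
    simp only [threeTermRec, map_sub, map_mul, ha n (by omega), hb n (by omega),
      ih₀ (by omega), ih₁ (by omega)]

theorem threeTermRec_mem {A : Type*} [SetLike A R] [SubringClass A R] {M : A} {a b : ℕ → R}
    {s t : R} (ha : ∀ n < m, a n ∈ M) (hb : ∀ n < m, b n ∈ M) (hs : s ∈ M) (ht : t ∈ M) :
    ∀ n ≤ m + 1, threeTermRec a b s t n ∈ M := by
  intro n hn
  induction n using Nat.twoStepInduction with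
  | zero => exact hs
  | one => exact ht
  | more n ih₀ ih₁ =>
    exact sub_mem (mul_mem (ha n (by omega)) (ih₁ (by omega)))
      (mul_mem (hb n (by omega)) (ih₀ (by omega)))

theorem threeTermRec_zero_right (a : ℕ → R) (n : ℕ) :
    threeTermRec a 0 0 1 (n + 1) = ∏ i ∈ Finset.range n, a i := by
  induction n with
  | zero => rfl
  | succ n ih => simp [threeTermRec, ih, Finset.prod_range_succ, mul_comm]

theorem mem_of_boundary_mem {K A : Type*} [Field K] [SetLike A K] [SubfieldClass A K] {M : A}
    {a b u : ℕ → K} (ha : ∀ n < m, a n ∈ M) (hb : ∀ n < m, b n ∈ M)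
    (hu : ∀ n < m, u (n + 2) = a n * u (n + 1) - b n * u n)
    (hP : threeTermRec a b 0 1 (m + 1) ≠ 0) (h₀ : u 0 ∈ M) (hm : u (m + 1) ∈ M) :
    ∀ n ≤ m + 1, u n ∈ M := by
  set P := threeTermRec a b 0 1 (m + 1)
  set Q := threeTermRec a b 1 0 (m + 1)
  have hPM : P ∈ M := threeTermRec_mem ha hb (zero_mem M) (one_mem M) _ le_rfl
  have hQM : Q ∈ M := threeTermRec_mem ha hb (one_mem M) (zero_mem M) _ le_rfl
  have hlin : u (m + 1) = u 0 * Q + u 1 * P :=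
    (eq_threeTermRec hu _ le_rfl).trans (threeTermRec_eq_add ..)
  have h₁ : u 1 ∈ M := by
    rw [eq_div_of_mul_eq hP (eq_sub_of_add_eq' hlin.symm)]
    exact div_mem (sub_mem hm (mul_mem h₀ hQM)) hPM
  intro n hn
  rw [eq_threeTermRec hu n hn]
  exact threeTermRec_mem ha hb h₀ h₁ n hn

theorem threeTermRec_ne_zero_of_algebraicIndependent [Algebra R S] {y : Fin m → S}
    (hy : AlgebraicIndependent R y) {c d : Fin m → R} (hc : ∏ i, c i ≠ 0) {a b : ℕ → S}
    (ha : ∀ i : Fin m, a i = algebraMap R S (c i) + algebraMap R S (d i) * y i)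
    (hb : ∀ i : Fin m, b i = y i) :
    threeTermRec a b 0 1 (m + 1) ≠ 0 := by
  -- Lift the solution to a polynomial in the `y i` and compare constant coefficients.
  let a' : ℕ → MvPolynomial (Fin m) R := fun n =>
    if h : n < m then C (c ⟨n, h⟩) + C (d ⟨n, h⟩) * X ⟨n, h⟩ else 0
  let b' : ℕ → MvPolynomial (Fin m) R := fun n => if h : n < m then X ⟨n, h⟩ else 0
  let c' : ℕ → R := fun n => if h : n < m then c ⟨n, h⟩ else 0
  set p := threeTermRec a' b' 0 1 (m + 1)
  have hcoeff : constantCoeff p = ∏ i, c i := by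
    rw [map_threeTermRec constantCoeff (a' := c') (b' := 0) (by simp +contextual [a', c'])
      (by simp +contextual [b']) _ _ _ le_rfl, map_zero, map_one, threeTermRec_zero_right,
      Finset.prod_range]
    simp [c']
  have heval : aeval y p = threeTermRec a b 0 1 (m + 1) := by
    have := map_threeTermRec (aeval y : MvPolynomial (Fin m) R →ₐ[R] S).toRingHom
      (a := a') (b := b') (a' := a) (b' := b) (m := m)
      (fun n hn => by simp [a', hn, ha ⟨n, hn⟩]) (fun n hn => by simp [b', hn, hb ⟨n, hn⟩])
      0 1 _ le_rfl
    simpa using this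
  have hp : p ≠ 0 := fun h => hc (by rw [← hcoeff, h, map_zero])
  rw [← heval]
  exact (map_ne_zero_iff _ hy).mpr hp

end ThreeTermRecurrence

section AlgebraicIndependence

variable {k K : Type*} [Field k] [Field K] [Algebra k K] {ι : Type*} [Finite ι]

theorem algebraicIndependent_of_adjoin_eq_top {w z : ι → K} (hw : AlgebraicIndependent k w)
    (hz : IntermediateField.adjoin k (Set.range z) = ⊤) : AlgebraicIndependent k z := by
  have halg : Algebra.IsAlgebraic (Algebra.adjoin k (Set.range z)) K := by
    rw [← IntermediateField.isAlgebraic_adjoin_iff_top, hz]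
    infer_instance
  exact (Algebra.IsAlgebraic.isTranscendenceBasis_of_lift_le_trdeg_of_finite k z
    hw.lift_cardinalMk_le_trdeg).1

theorem algebraicIndependent_of_mem_adjoin {w z : ι → K} (hw : AlgebraicIndependent k w)
    (hwz : ∀ i, w i ∈ IntermediateField.adjoin k (Set.range z)) :
    AlgebraicIndependent k z := by
  let L := IntermediateField.adjoin k (Set.range z)
  let w' : ι → L := fun i => ⟨w i, hwz i⟩
  let z' : ι → L := fun i => ⟨z i, IntermediateField.subset_adjoin _ _ ⟨i, rfl⟩⟩
  have hw' : AlgebraicIndependent k w' := AlgebraicIndependent.of_comp L.val hw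
  have hgen : IntermediateField.adjoin k (Set.range z') = ⊤ := by
    apply IntermediateField.lift_injective L
    rw [IntermediateField.lift_adjoin, IntermediateField.lift_top, ← Set.range_comp]
    rfl
  exact (algebraicIndependent_of_adjoin_eq_top hw' hgen).map' (f := L.val) L.val.injective
end AlgebraicIndependence

section ClusterCharacters

variable {k K : Type*} [Field k] [Field K] [Algebra k K] {r : ℕ} {u y : ℕ → K}

/-- The coefficient `X n` for which `u` satisfies `u (n + 2) = X n * u (n + 1) - y n * u n`. For
`u n = x_{n-1}` it is the cluster character of the simple module `S_n`.
It satisfies the recurrence only where `u (n + 1) ≠ 0`. -/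
def simpleCharacter (u y : ℕ → K) (n : ℕ) : K :=
  (u (n + 2) + y n * u n) / u (n + 1)

theorem eq_simpleCharacter_mul_sub {n : ℕ} (hn : u (n + 1) ≠ 0) :
    u (n + 2) = simpleCharacter u y n * u (n + 1) - y n * u n := by
  rw [simpleCharacter, div_mul_cancel₀ _ hn, add_sub_cancel_right]

theorem mem_adjoin_of_boundary_mem_bot
    (hu₀ : u 0 ∈ (⊥ : IntermediateField k K)) (hur : u (r + 1) ∈ (⊥ : IntermediateField k K)) :
    ∀ n ≤ r + 1, u n ∈ IntermediateField.adjoin k (Set.range fun i : Fin r => u (i + 1)) := by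
  rintro (_ | n) hn
  · exact (bot_le : (⊥ : IntermediateField k K) ≤ _) hu₀
  · obtain rfl | hn := (Nat.succ_le_succ_iff.mp hn).eq_or_lt
    · exact (bot_le : (⊥ : IntermediateField k K) ≤ _) hur
    · exact IntermediateField.subset_adjoin _ _ ⟨⟨n, hn⟩, rfl⟩

theorem ne_zero_of_boundary_ne_zero (hur : u (r + 1) ≠ 0)
    (hu : AlgebraicIndependent k (fun i : Fin r => u (i + 1))) :
    ∀ n ≤ r, u (n + 1) ≠ 0 := by
  intro n hn
  obtain rfl | hn := hn.eq_or_lt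
  · exact hur
  · exact hu.ne_zero ⟨n, hn⟩

theorem threeTermRec_simpleCharacter_ne_zero
    (hu₀ : u 0 ∈ (⊥ : IntermediateField k K)) (hur : u (r + 1) ∈ (⊥ : IntermediateField k K))
    (hur_ne : u (r + 1) ≠ 0)
    (hyu : AlgebraicIndependent k
      (Sum.elim (fun i : Fin r => y i) (fun i : Fin r => u (i + 1)))) :
    threeTermRec (simpleCharacter u y) y 0 1 (r + 1) ≠ 0 := by
  obtain ⟨hu_indep, hy_indep⟩ := AlgebraicIndependent.sumElim_iff.mp hyu
  have hu := ne_zero_of_boundary_ne_zero hur_ne hu_indep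
  let F := IntermediateField.adjoin k (Set.range fun i : Fin r => u (i + 1))
  have huF : ∀ n ≤ r + 1, u n ∈ F := mem_adjoin_of_boundary_mem_bot hu₀ hur
  have hyF : AlgebraicIndependent F (fun i : Fin r => y i) :=
    IntermediateField.algebraicIndependent_adjoin_iff.mpr hy_indep
  let v : ∀ n ≤ r + 1, F := fun n hn => ⟨u n, huF n hn⟩
  refine threeTermRec_ne_zero_of_algebraicIndependent hyF
    (c := fun i => v (i + 2) (by omega) / v (i + 1) (by omega))
    (d := fun i => v i (by omega) / v (i + 1) (by omega)) ?_ (fun i => ?_) (fun _ => rfl)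
  · refine Finset.prod_ne_zero_iff.mpr fun i _ => div_ne_zero ?_ ?_
    · exact Subtype.coe_ne_coe.mp (hu (i + 1) (by omega))
    · exact Subtype.coe_ne_coe.mp (hu i (by omega))
  · simp only [simpleCharacter, v, map_div₀, IntermediateField.algebraMap_apply]
    ring

theorem algebraicIndependent_simpleCharacter
    (hu₀ : u 0 ∈ (⊥ : IntermediateField k K)) (hur : u (r + 1) ∈ (⊥ : IntermediateField k K))
    (hur_ne : u (r + 1) ≠ 0)
    (hyu : AlgebraicIndependent k
      (Sum.elim (fun i : Fin r => y i) (fun i : Fin r => u (i + 1)))) :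
    AlgebraicIndependent k
      (Sum.elim (fun i : Fin r => simpleCharacter u y i) (fun i : Fin r => y i)) := by
  let z := Sum.elim (fun i : Fin r => simpleCharacter u y i) (fun i : Fin r => y i)
  let M := IntermediateField.adjoin k (Set.range z)
  have hX : ∀ n < r, simpleCharacter u y n ∈ M := fun n hn =>
    IntermediateField.subset_adjoin _ _ ⟨Sum.inl ⟨n, hn⟩, rfl⟩
  have hy : ∀ n < r, y n ∈ M := fun n hn =>
    IntermediateField.subset_adjoin _ _ ⟨Sum.inr ⟨n, hn⟩, rfl⟩
  have hu : ∀ n ≤ r, u (n + 1) ≠ 0 :=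
    ne_zero_of_boundary_ne_zero hur_ne (AlgebraicIndependent.sumElim_iff.mp hyu).1
  have huM : ∀ n ≤ r + 1, u n ∈ M :=
    mem_of_boundary_mem hX hy (fun n hn => eq_simpleCharacter_mul_sub (hu n hn.le))
      (threeTermRec_simpleCharacter_ne_zero hu₀ hur hur_ne hyu)
      ((bot_le : ⊥ ≤ M) hu₀) ((bot_le : ⊥ ≤ M) hur)
  refine algebraicIndependent_of_mem_adjoin hyu ?_
  rintro (i | i)
  · exact hy i i.isLt
  · exact huM _ (by omega)

end ClusterCharacters

theorem algebraicIndependent_ycl_xcl (r : ℕ) :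
    AlgebraicIndependent ℚ
      (Sum.elim (fun i : Fin r => ycl r (i : ℤ)) (fun i : Fin r => xcl r (i : ℤ))) := by
  have hX : AlgebraicIndependent ℚ
      (algebraMap (MvPolynomial (Fin r ⊕ Fin r) ℚ) (Kr r) ∘ MvPolynomial.X) :=
    (MvPolynomial.algebraicIndependent_X (Fin r ⊕ Fin r) ℚ).map'
      (f := IsScalarTower.toAlgHom ℚ _ (Kr r)) (IsFractionRing.injective _ _)
  convert hX.comp Sum.swap Sum.swap_leftInverse.injective using 1
  ext (i | i) <;> simp [xcl, ycl]

theorem simpleCharacter_xcl_ycl (r n : ℕ) :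
    simpleCharacter (fun n : ℕ => xcl r (n - 1)) (fun n : ℕ => ycl r n) n = X1 r n := by
  simp only [simpleCharacter, X1, Nat.cast_succ, add_sub_cancel_right]

theorem cluster_character_typeA_algebraicIndependent_general (r : ℕ) :
    AlgebraicIndependent
      (IntermediateField.adjoin ℚ (Set.range fun j : Fin r => ycl r (j : ℤ)))
      (fun i : Fin r => X1 r (i : ℤ)) := by
  let u : ℕ → Kr r := fun n => xcl r (n - 1)
  have hu₀ : u 0 = 1 := by simp [u, xcl]
  have hur : u (r + 1) = 1 := by simp [u, xcl]
  have hyu : AlgebraicIndependent ℚ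
      (Sum.elim (fun i : Fin r => ycl r (i : ℤ)) (fun i : Fin r => u (i + 1))) := by
    simpa [u] using algebraicIndependent_ycl_xcl r
  have hXy : AlgebraicIndependent ℚ
      (Sum.elim (fun i : Fin r => X1 r (i : ℤ)) (fun j : Fin r => ycl r (j : ℤ))) := by
    simpa only [u, simpleCharacter_xcl_ycl] using
      algebraicIndependent_simpleCharacter (y := fun n : ℕ => ycl r n)
        (hu₀ ▸ one_mem _) (hur ▸ one_mem _) (hur ▸ one_ne_zero) hyu
  exact IntermediateField.algebraicIndependent_adjoin_iff.mpr
    (AlgebraicIndependent.sumElim_iff.mp hXy).2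

/-- Lemma 3.3: for `r` even, the family `{X_{0,1}, …, X_{r-1,1}}` is algebraically
independent over the subfield `ℚ(y_0, …, y_{r-1})` of `K_r`. -/
theorem cluster_character_typeA_algebraicIndependent (r : ℕ) (hr : 2 ≤ r)
    (hre : Even r) :
    AlgebraicIndependent
      (IntermediateField.adjoin ℚ (Set.range fun j : Fin r => ycl r (j : ℤ)))
      (fun i : Fin r => X1 r (i : ℤ)) :=
  cluster_character_typeA_algebraicIndependent_general r
end

section
/- Let R be a commutative ring and q ∈ R. Define polynomials F^q_n, S^q_n ∈ R[X] by F^q_0 = 1, F^q_1 = X, F^q_2 = X² − 2q, F^q_{n+1} = X · F^q_n − q · F^q_{n-1} for n ≥ 2, and S^q_0 = 1, S^q_1 = X, S^q_{n+1} = X · S^q_n − q · S^q_{n-1} for n ≥ 1. Then for every n ≥ 0, S^q_n = Σ_{k=0}^{⌊n/2⌋} q^k · F^q_{n−2k} in R[X]. -/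
/-!
If `S` solves `u (n + 2) = X * u (n + 1) - q * u n`, then so does `n ↦ S (n + 2) - q * S n`.
The latter takes the values `F 2` and `F 3` at `0` and `1`, so `F (n + 2) = S (n + 2) - q * S n`
for all `n`. Unrolling `S (n + 2) = F (n + 2) + q * S n` down to `S 0 = F 0` or `S 1 = F 1`
gives the sum.
-/

theorem eq_of_two_step_recurrence {α : Type*} {φ : α → α → α} {u v : ℕ → α}
    (hu : ∀ n, u (n + 2) = φ (u (n + 1)) (u n)) (hv : ∀ n, v (n + 2) = φ (v (n + 1)) (v n))
    (h0 : u 0 = v 0) (h1 : u 1 = v 1) (n : ℕ) : u n = v n := by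
  induction n using Nat.twoStepInduction with
  | zero => exact h0
  | one => exact h1
  | more n ih₀ ih₁ => rw [hu, hv, ih₀, ih₁]

theorem eq_sum_pow_smul_of_eq_add_smul {M A : Type*} [Monoid M] [AddCommMonoid A]
    [DistribMulAction M A] {c : M} {d : ℕ} (hd : 0 < d) {f s : ℕ → A}
    (hinit : ∀ n < d, s n = f n) (hstep : ∀ n, s (n + d) = f (n + d) + c • s n) (n : ℕ) :
    s n = ∑ k ∈ Finset.range (n / d + 1), c ^ k • f (n - d * k) := by
  induction n using Nat.strong_induction_on with
  | h n ih =>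
    obtain hlt | hle := lt_or_ge n d
    · simp [Nat.div_eq_of_lt hlt, hinit n hlt]
    · obtain ⟨m, rfl⟩ := Nat.exists_eq_add_of_le' hle
      have hshift (k : ℕ) : m + d - d * (k + 1) = m - d * k := by
        rw [Nat.mul_succ, Nat.add_sub_add_right]
      rw [hstep, ih m (Nat.lt_add_of_pos_right hd), Nat.add_div_right m hd,
        Finset.sum_range_succ' _ (m / d + 1), add_comm (f (m + d))]
      simp only [hshift, Finset.smul_sum, smul_smul, ← pow_succ', pow_zero, one_smul, mul_zero,
        Nat.sub_zero]

section Recurrence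

variable {A : Type*} [Ring A] {x c : A} {f s : ℕ → A}

theorem recurrence_sub_mul_of_commute (hxc : Commute x c)
    (hs : ∀ n, s (n + 2) = x * s (n + 1) - c * s n) (n : ℕ) :
    s (n + 4) - c * s (n + 2) =
      x * (s (n + 3) - c * s (n + 1)) - c * (s (n + 2) - c * s n) := by
  calc s (n + 4) - c * s (n + 2)
      = x * s (n + 3) - c * s (n + 2) - c * (x * s (n + 1) - c * s n) := by
        rw [← hs n, ← hs (n + 2)]
    _ = x * (s (n + 3) - c * s (n + 1)) - c * (s (n + 2) - c * s n) := by
        simp only [mul_sub, ← mul_assoc, hxc.eq]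
        abel

theorem chebyshev_first_add_two_eq_second_sub (hxc : Commute x c)
    (hf1 : f 1 = x) (hf2 : f 2 = x ^ 2 - 2 * c)
    (hf : ∀ n, f (n + 3) = x * f (n + 2) - c * f (n + 1))
    (hs0 : s 0 = 1) (hs1 : s 1 = x) (hs : ∀ n, s (n + 2) = x * s (n + 1) - c * s n) (n : ℕ) :
    f (n + 2) = s (n + 2) - c * s n := by
  have hs2 : s 2 = x ^ 2 - c := by rw [hs 0, hs1, hs0, mul_one, sq]
  have h2 : f 2 = s 2 - c * s 0 := by rw [hf2, hs2, hs0, mul_one, two_mul, sub_sub]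
  have h3 : f 3 = s 3 - c * s 1 := by
    rw [hf 0, hs 1, h2, hf1, hs1, hs0, mul_one, mul_sub, hxc.eq]
  exact eq_of_two_step_recurrence (φ := fun a b ↦ x * a - c * b) (u := fun n ↦ f (n + 2))
    (v := fun n ↦ s (n + 2) - c * s n) (fun n ↦ hf (n + 1))
    (recurrence_sub_mul_of_commute hxc hs) h2 h3 n

theorem quantized_chebyshev_second_eq_sum_first_general (hxc : Commute x c)
    (hf0 : f 0 = 1) (hf1 : f 1 = x) (hf2 : f 2 = x ^ 2 - 2 * c)
    (hf : ∀ n, f (n + 3) = x * f (n + 2) - c * f (n + 1))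
    (hs0 : s 0 = 1) (hs1 : s 1 = x) (hs : ∀ n, s (n + 2) = x * s (n + 1) - c * s n) (n : ℕ) :
    s n = ∑ k ∈ Finset.range (n / 2 + 1), c ^ k * f (n - 2 * k) := by
  have hinit : ∀ m < 2, s m = f m
    | 0, _ => hs0.trans hf0.symm
    | 1, _ => hs1.trans hf1.symm
  have hstep (m : ℕ) : s (m + 2) = f (m + 2) + c • s m := by
    rw [chebyshev_first_add_two_eq_second_sub hxc hf1 hf2 hf hs0 hs1 hs, smul_eq_mul,
      sub_add_cancel]
  exact eq_sum_pow_smul_of_eq_add_smul two_pos hinit hstep n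

end Recurrence

/-- Corollary 6.2: the quantized Chebyshev polynomials of the first and second kinds
satisfy `S_n = Σ_{k=0}^{⌊n/2⌋} q^k · F_{n−2k}`. -/
theorem quantized_chebyshev_second_eq_sum_first {R : Type*} [CommRing R] (q : R)
    (F S : ℕ → Polynomial R)
    (hF0 : F 0 = 1) (hF1 : F 1 = Polynomial.X)
    (hF2 : F 2 = Polynomial.X ^ 2 - Polynomial.C (2 * q))
    (hFrec : ∀ n : ℕ, 2 ≤ n →
      F (n + 1) = Polynomial.X * F n - Polynomial.C q * F (n - 1))
    (hS0 : S 0 = 1) (hS1 : S 1 = Polynomial.X)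
    (hSrec : ∀ n : ℕ, 1 ≤ n →
      S (n + 1) = Polynomial.X * S n - Polynomial.C q * S (n - 1)) :
    ∀ n : ℕ, S n = ∑ k ∈ Finset.range (n / 2 + 1), Polynomial.C (q ^ k) * F (n - 2 * k) := by
  simpa only [Polynomial.C_pow] using
    quantized_chebyshev_second_eq_sum_first_general (Commute.all Polynomial.X (Polynomial.C q))
      hF0 hF1 (by rw [hF2, map_mul, map_ofNat]) (fun n ↦ hFrec (n + 2) (by lia))
      hS0 hS1 (fun n ↦ hSrec (n + 1) (by lia))
end
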